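/- arXiv:math/0509474 — 5 statements merged into one kernel-verified Lean document; each statement's English description precedes it below -/
import Mathlib

section
/- For every 0 ≤ k ≤ n, the k-th Kneser–Hecke operator T_k : V → V, defined on basis vectors by T_k([C]) = Σ_{D ∈ F, dim(C∩D) = n−k} [D], is a self-adjoint linear operator with respect to the Hermitian inner product on V, i.e. (T_k v, w) = (v, T_k w) for all v, w ∈ V. -/
noncomputable section

namespace KneserHeckeCodes

open Finset

variable {F : Type} [Field F] [Fintype F]

/-- The all-ones vector. -/
def allOnes (F : Type) [One F] (N : ℕ) : Fin N → F := fun _ => 1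

/-- The dual code with respect to the (bilinear or Hermitian) form
`b(x,y) = ∑ i, x i * f (y i)`. -/
def dualCode {N : ℕ} (f : F → F) (C : Submodule F (Fin N → F)) : Submodule F (Fin N → F) where
  carrier := {v | ∀ c ∈ C, ∑ i, v i * f (c i) = 0}
  add_mem' := by
    intro a b ha hb c hc
    have h1 := ha c hc
    have h2 := hb c hc
    simp [Pi.add_apply, add_mul, Finset.sum_add_distrib, h1, h2]
  zero_mem' := by
    intro c hc
    simp
  smul_mem' := by
    intro r a ha c hc
    have h := ha c hc
    simp [Pi.smul_apply, smul_eq_mul, mul_assoc, ← Finset.mul_sum, h]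

/-- Action of a coordinate permutation on a code. -/
def permCode {N : ℕ} (π : Equiv.Perm (Fin N)) (C : Submodule F (Fin N → F)) :
    Submodule F (Fin N → F) :=
  C.map (LinearMap.funLeft F F π)

/-- Permutation equivalence of codes. -/
def equivCode {N : ℕ} (C D : Submodule F (Fin N → F)) : Prop :=
  ∃ π : Equiv.Perm (Fin N), permCode π C = D

/-- The order of the automorphism group of a code. -/
def autCard {N : ℕ} (C : Submodule F (Fin N → F)) : ℕ :=
  Nat.card {π : Equiv.Perm (Fin N) // permCode π C = C}

/-- `mon c v` is the number of columns of the `m × N` matrix with rows `c` equal to `v`. -/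
def mon {m N : ℕ} (c : Fin m → (Fin N → F)) (v : Fin m → F) : ℕ :=
  Nat.card {i : Fin N // ∀ j, c j i = v j}

/-- `aX X C` is the number of `m`-tuples of codewords of `C` with monomial `X`. -/
def aX {m N : ℕ} (X : (Fin m → F) → ℕ) (C : Submodule F (Fin N → F)) : ℕ :=
  Nat.card {c : Fin m → (Fin N → F) // (∀ j, c j ∈ C) ∧ mon c = X}

/-- The set `M_m` of monomials of degree `N` in genus `m`. -/
def MmSet (F : Type) [Fintype F] (m N : ℕ) : Set ((Fin m → F) → ℕ) :=
  {X | ∑ v, X v = N}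

/-- The rank of a monomial. -/
def rkX (F : Type) [Field F] {m : ℕ} (X : (Fin m → F) → ℕ) : ℕ :=
  Module.finrank F (Submodule.span F {v : Fin m → F | 0 < X v})

/-- The set `M*_m` of monomials of degree `N` and full rank `m`. -/
def MstarSet (F : Type) [Field F] [Fintype F] (m N : ℕ) : Set ((Fin m → F) → ℕ) :=
  {X | X ∈ MmSet F m N ∧ rkX F X = m}

instance finiteSubmodule {N : ℕ} : Finite (Submodule F (Fin N → F)) :=
  Finite.of_injective (fun C => (C : Set (Fin N → F))) SetLike.coe_injective

/-- The set of equivalence classes of codes in the family `𝓕`. -/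
abbrev ClassesB {N : ℕ} (𝓕 : Set (Submodule F (Fin N → F))) : Type :=
  Quot (fun C D : 𝓕 => equivCode C.1 D.1)

/-- The equivalence class of a code. -/
def clsOf {N : ℕ} {𝓕 : Set (Submodule F (Fin N → F))} (C : 𝓕) : ClassesB 𝓕 :=
  Quot.mk _ C

/-- A representative of an equivalence class. -/
def repB {N : ℕ} {𝓕 : Set (Submodule F (Fin N → F))} (b : ClassesB 𝓕) : 𝓕 :=
  Quot.out b

/-- The Hermitian inner product on `V` with `([C],[D]) = |Aut C| δ_{[C],[D]}`. -/
def innerV {N : ℕ} (𝓕 : Set (Submodule F (Fin N → F))) (v w : ClassesB 𝓕 → ℂ) : ℂ :=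
  letI : Fintype (ClassesB 𝓕) := Fintype.ofFinite _
  ∑ b : ClassesB 𝓕, (starRingEnd ℂ) (v b) * w b * (autCard (repB b).1 : ℂ)

/-- The `k`-th Kneser-Hecke operator `T_k` on `V`, where `n` is the dimension of the codes:
`T_k [C] = ∑_{D ∈ 𝓕, dim (C ⊓ D) = n - k} [D]`. -/
def heckeT {N : ℕ} (𝓕 : Set (Submodule F (Fin N → F))) (n k : ℕ)
    (v : ClassesB 𝓕 → ℂ) : ClassesB 𝓕 → ℂ :=
  letI : Fintype (ClassesB 𝓕) := Fintype.ofFinite _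
  fun b' => ∑ b : ClassesB 𝓕, v b *
    (Nat.card {D : 𝓕 // Module.finrank F ↥((repB b).1 ⊓ D.1) + k = n ∧ clsOf D = b'} : ℂ)

/-- The linear extension of `a_X` to `V`. -/
def aXc {N m : ℕ} (𝓕 : Set (Submodule F (Fin N → F))) (X : (Fin m → F) → ℕ)
    (v : ClassesB 𝓕 → ℂ) : ℂ :=
  letI : Fintype (ClassesB 𝓕) := Fintype.ofFinite _
  ∑ b : ClassesB 𝓕, v b * (aX X (repB b).1 : ℂ)

/-- `V_m`, the joint kernel of all `a_X`, `X ∈ M_m`. -/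
def VmSet {N : ℕ} (𝓕 : Set (Submodule F (Fin N → F))) (m : ℕ) : Set (ClassesB 𝓕 → ℂ) :=
  {v | ∀ X ∈ MmSet F m N, aXc 𝓕 X v = 0}

/-- `V_{m-1}` (with `V_{-1} = V`). -/
def VmPred {N : ℕ} (𝓕 : Set (Submodule F (Fin N → F))) (m : ℕ) : Set (ClassesB 𝓕 → ℂ) :=
  match m with
  | 0 => Set.univ
  | m + 1 => VmSet 𝓕 m

/-- `W_m = V_m^⊥`. -/
def WmSet {N : ℕ} (𝓕 : Set (Submodule F (Fin N → F))) (m : ℕ) : Set (ClassesB 𝓕 → ℂ) :=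
  {w | ∀ v ∈ VmSet 𝓕 m, innerV 𝓕 w v = 0}

/-- `Y_m = W_m ∩ V_{m-1}`. -/
def YmSet {N : ℕ} (𝓕 : Set (Submodule F (Fin N → F))) (m : ℕ) : Set (ClassesB 𝓕 → ℂ) :=
  WmSet 𝓕 m ∩ VmPred 𝓕 m

/-- `∑_{E ∈ E_C(c)} α_E`, counted as the number of pairs `(E, D)` with `E ≤ C` of
dimension `n-1` containing all entries of `c` and `D ∈ 𝓕` with `D ⊓ C = E`. -/
def pairCount {N : ℕ} (𝓕 : Set (Submodule F (Fin N → F))) (n : ℕ)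
    (C : Submodule F (Fin N → F)) {m : ℕ} (c : Fin m → (Fin N → F)) : ℕ :=
  Nat.card {ED : Submodule F (Fin N → F) × 𝓕 //
    ED.1 ≤ C ∧ Module.finrank F ↥ED.1 + 1 = n ∧ (∀ j, c j ∈ ED.1) ∧ ED.2.1 ⊓ C = ED.1}

/-- Condition ⋆ at level `m` for the subset `M⁰ ⊆ M*_m` with constant `α`. -/
def CondStar {N : ℕ} (𝓕 : Set (Submodule F (Fin N → F))) (n m : ℕ)
    (M0 : Set ((Fin m → F) → ℕ)) (α : ℕ) : Prop :=
  M0 ⊆ MstarSet F m N ∧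
  VmSet 𝓕 m = {v | v ∈ VmPred 𝓕 m ∧ ∀ X ∈ M0, aXc 𝓕 X v = 0} ∧
  ∀ C ∈ 𝓕, ∀ c : Fin m → (Fin N → F), (∀ j, c j ∈ C) → mon c ∈ M0 →
    pairCount 𝓕 n C c = α

/-- The genus-`m` complete weight enumerator. -/
def cwe {N : ℕ} (m : ℕ) (C : Submodule F (Fin N → F)) : MvPolynomial (Fin m → F) ℂ :=
  letI : Fintype C := Fintype.ofFinite _
  ∑ c : Fin m → C, MvPolynomial.monomial
    (Finsupp.equivFunOnFinite.symm (mon (fun j => (c j : Fin N → F)))) (1 : ℂ)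

end KneserHeckeCodes

open KneserHeckeCodes

namespace KneserHeckeCodes

section aux

variable {F : Type} [Field F] [Fintype F] {N : ℕ}

theorem permCode_permCode (π τ : Equiv.Perm (Fin N)) (C : Submodule F (Fin N → F)) :
    permCode π (permCode τ C) = permCode (τ * π) C := by
  unfold permCode
  rw [← Submodule.map_comp]
  rfl

theorem permCode_one (C : Submodule F (Fin N → F)) : permCode 1 C = C := by
  unfold permCode
  exact Submodule.map_id C

theorem equivCode_equivalence (𝓕 : Set (Submodule F (Fin N → F))) :
    Equivalence (fun C D : 𝓕 => equivCode C.1 D.1) where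
  refl C := ⟨1, permCode_one _⟩
  symm := by
    rintro C D ⟨π, h⟩
    exact ⟨π⁻¹, by rw [← h, permCode_permCode, mul_inv_cancel, permCode_one]⟩
  trans := by
    rintro C D E ⟨π, h⟩ ⟨τ, h'⟩
    exact ⟨π * τ, by rw [← permCode_permCode, h, h']⟩

theorem clsOf_eq_iff {𝓕 : Set (Submodule F (Fin N → F))} (C D : 𝓕) :
    clsOf C = clsOf D ↔ equivCode C.1 D.1 :=
  (equivCode_equivalence 𝓕).quot_mk_eq_iff C D

theorem clsOf_repB {𝓕 : Set (Submodule F (Fin N → F))} (b : ClassesB 𝓕) :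
    clsOf (repB b) = b := Quot.out_eq b

theorem finrank_permCode (π : Equiv.Perm (Fin N)) (C : Submodule F (Fin N → F)) :
    Module.finrank F ↥(permCode π C) = Module.finrank F ↥C := by
  unfold permCode
  exact (Submodule.equivMapOfInjective _
    (LinearMap.funLeft_injective_of_surjective F F _ π.surjective) C).finrank_eq.symm

theorem permCode_inf (π : Equiv.Perm (Fin N)) (C D : Submodule F (Fin N → F)) :
    permCode π (C ⊓ D) = permCode π C ⊓ permCode π D := by
  unfold permCode
  exact Submodule.map_inf _ (LinearMap.funLeft_injective_of_surjective F F _ π.surjective)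

theorem count_mul_aut {𝓕 : Set (Submodule F (Fin N → F))}
    (hcl : ∀ C ∈ 𝓕, ∀ π : Equiv.Perm (Fin N), permCode π C ∈ 𝓕) (n k : ℕ)
    (C D : 𝓕) :
    Nat.card {E : 𝓕 // Module.finrank F ↥(C.1 ⊓ E.1) + k = n ∧ clsOf E = clsOf D}
      * autCard D.1 =
    Nat.card {π : Equiv.Perm (Fin N) // Module.finrank F ↥(C.1 ⊓ permCode π D.1) + k = n} := by
  unfold autCard
  rw [← Nat.card_prod]
  have hex : ∀ E : {E : 𝓕 // Module.finrank F ↥(C.1 ⊓ E.1) + k = n ∧ clsOf E = clsOf D},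
      ∃ π : Equiv.Perm (Fin N), permCode π D.1 = E.1.1 := fun E =>
    (clsOf_eq_iff D E.1).1 E.2.2.symm
  choose p hp using hex
  refine Nat.card_congr (Equiv.ofBijective
    (fun x => ⟨x.2.1 * p x.1, by
      rw [← permCode_permCode, x.2.2, hp]; exact x.1.2.1⟩) ⟨?_, ?_⟩)
  · rintro ⟨E, a, ha⟩ ⟨E', a', ha'⟩ h
    have h1 : a * p E = a' * p E' := congrArg Subtype.val h
    have hE : E = E' := by
      apply Subtype.ext
      apply Subtype.ext
      rw [← hp E, ← hp E']
      conv_lhs => rw [← ha]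
      conv_rhs => rw [← ha']
      rw [permCode_permCode, permCode_permCode, h1]
    subst hE
    have : a = a' := mul_right_cancel h1
    subst this
    rfl
  · rintro ⟨π, h⟩
    let E : {E : 𝓕 // Module.finrank F ↥(C.1 ⊓ E.1) + k = n ∧ clsOf E = clsOf D} :=
      ⟨⟨permCode π D.1, hcl _ D.2 π⟩, h, ((clsOf_eq_iff D _).2 ⟨π, rfl⟩).symm⟩
    refine ⟨⟨E, π * (p E)⁻¹, ?_⟩, ?_⟩
    · rw [← permCode_permCode]
      have : permCode π D.1 = permCode (p E) D.1 := (hp E).symm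
      rw [this, permCode_permCode, mul_inv_cancel, permCode_one]
    · apply Subtype.ext
      simp

theorem count_symm (n k : ℕ) (C D : Submodule F (Fin N → F)) :
    Nat.card {π : Equiv.Perm (Fin N) // Module.finrank F ↥(C ⊓ permCode π D) + k = n} =
    Nat.card {π : Equiv.Perm (Fin N) // Module.finrank F ↥(D ⊓ permCode π C) + k = n} := by
  refine Nat.card_congr ((Equiv.inv (Equiv.Perm (Fin N))).subtypeEquiv fun π => ?_)
  rw [← finrank_permCode π⁻¹ (C ⊓ permCode π D), permCode_inf, permCode_permCode,
    mul_inv_cancel, permCode_one, inf_comm]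
  rfl

theorem count_adj {𝓕 : Set (Submodule F (Fin N → F))}
    (hcl : ∀ C ∈ 𝓕, ∀ π : Equiv.Perm (Fin N), permCode π C ∈ 𝓕) (n k : ℕ)
    (b b' : ClassesB 𝓕) :
    Nat.card {E : 𝓕 // Module.finrank F ↥((repB b).1 ⊓ E.1) + k = n ∧ clsOf E = b'}
      * autCard (repB b').1 =
    Nat.card {E : 𝓕 // Module.finrank F ↥((repB b').1 ⊓ E.1) + k = n ∧ clsOf E = b}
      * autCard (repB b).1 := by
  have h1 := count_mul_aut hcl n k (repB b) (repB b')
  have h2 := count_mul_aut hcl n k (repB b') (repB b)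
  rw [clsOf_repB] at h1 h2
  rw [h1, h2, count_symm]

end aux

end KneserHeckeCodes

/-- For every `0 ≤ k ≤ n`, the `k`-th Kneser-Hecke operator `T_k` is a
self-adjoint linear operator on `V` with respect to the Hermitian inner product. -/
theorem kneserHeckeOperator_selfAdjoint
    {F : Type} [Field F] [Fintype F] {n : ℕ}
    (σ : F →+* F) (hσ : ∀ x, σ (σ x) = x)
    (𝓕 : Set (Submodule F (Fin (2 * n) → F)))
    (h𝓕ne : 𝓕.Nonempty)
    (h𝓕sd : ∀ C ∈ 𝓕, C = dualCode (⇑σ) C)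
    (h𝓕cl : ∀ C ∈ 𝓕, ∀ π : Equiv.Perm (Fin (2 * n)), permCode π C ∈ 𝓕)
    (k : ℕ) (hk : k ≤ n)
    (v w : ClassesB 𝓕 → ℂ) :
    innerV 𝓕 (heckeT 𝓕 n k v) w = innerV 𝓕 v (heckeT 𝓕 n k w) := by
  unfold innerV heckeT
  simp only [map_sum, map_mul, Complex.conj_natCast, Finset.sum_mul, Finset.mul_sum]
  rw [Finset.sum_comm]
  refine Finset.sum_congr rfl fun b _ => Finset.sum_congr rfl fun b' _ => ?_
  have h := congrArg (Nat.cast : ℕ → ℂ) (count_adj h𝓕cl n k b b')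
  push_cast at h
  linear_combination (starRingEnd ℂ) (v b) * w b' * h
end
end

section
/- Let q be odd, let C = C^⊥ ≤ F_q^{2n} be a self-dual code, let 0 ≤ m ≤ n, and let c^(1), …, c^(m) ∈ C be linearly independent. Then Σ_E #{D ≤ F_q^{2n} : D = D^⊥ and D ∩ C = E} = (q^{n−m} − 1)/(q − 1), where the sum runs over all subspaces E ≤ C with dim E = n−1 and c^(i) ∈ E for all i. -/
noncomputable section

open KneserHeckeCodes


section helpers

open Module

/-- Uniqueness and existence of the second neighbour. -/
lemma aux_existsUnique {F V : Type*} [Field F] [AddCommGroup V] [Module F V]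
    [FiniteDimensional F V] (h2 : (2 : F) ≠ 0) (B : LinearMap.BilinForm F V)
    (hB : B.Nondegenerate) (hs : ∀ x y, B x y = B y x)
    (C E : Submodule F V) (hC : C = B.orthogonal C) (hE : E ≤ C)
    (hd : finrank F E + 1 = finrank F C) :
    ∃! D : Submodule F V, D = B.orthogonal D ∧ D ⊓ C = E := by
  have hr : B.IsRefl := fun x y h => by rw [hs]; exact h
  have hCC : ∀ x ∈ C, ∀ y ∈ C, B x y = 0 := by
    intro x hx y hy
    rw [hC] at hy
    exact hy x hx
  have hnot : ¬ B.orthogonal E ≤ C := by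
    intro h
    have h1 : B.orthogonal C ≤ B.orthogonal (B.orthogonal E) :=
      LinearMap.BilinForm.orthogonal_le h
    rw [LinearMap.BilinForm.orthogonal_orthogonal hB hr, ← hC] at h1
    have := Submodule.finrank_mono h1
    omega
  obtain ⟨u, huE, huC⟩ := SetLike.not_le_iff_exists.1 hnot
  have : ∃ e ∈ C, B e u ≠ 0 := by
    by_contra! hcon
    apply huC
    rw [hC]
    exact hcon
  obtain ⟨e0, he0, hne⟩ := this
  obtain ⟨e, he, heu⟩ : ∃ e ∈ C, B e u = 1 :=
    ⟨(B e0 u)⁻¹ • e0, C.smul_mem _ he0, by simp [hne]⟩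
  have huE' : ∀ a ∈ E, B a u = 0 := huE
  have heE : e ∉ E := fun h => by simp [huE' e h] at heu
  have hspan : ∀ y ∈ C, ∃ a ∈ E, ∃ t : F, y = a + t • e := by
    have hle : E ⊔ Submodule.span F {e} ≤ C :=
      sup_le hE ((Submodule.span_singleton_le_iff_mem _ _).2 he)
    have hlt : E < E ⊔ Submodule.span F {e} := by
      refine lt_of_le_of_ne le_sup_left fun h => heE ?_
      rw [h]
      exact Submodule.mem_sup_right (Submodule.mem_span_singleton_self e)
    have := Submodule.finrank_lt_finrank_of_lt hlt
    have heq := Submodule.eq_of_le_of_finrank_le hle (by omega)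
    intro y hy
    rw [← heq] at hy
    obtain ⟨a, ha, z, hz, rfl⟩ := Submodule.mem_sup.1 hy
    obtain ⟨t, rfl⟩ := Submodule.mem_span_singleton.1 hz
    exact ⟨a, ha, t, rfl⟩
  obtain ⟨v, hvE, hev, hvv⟩ : ∃ v, (∀ a ∈ E, B a v = 0) ∧ B e v = 1 ∧ B v v = 0 := by
    refine ⟨u - (B u u / 2) • e, ?_, ?_, ?_⟩
    · intro a ha
      simp [huE' a ha, hCC a (hE ha) e he]
    · simp [heu, hCC e he e he]
    · simp [heu, hCC e he e he, hs u e]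
      field_simp
      ring
  have hve : B v e = 1 := by rw [hs]; exact hev
  have hvE' : ∀ a ∈ E, B v a = 0 := fun a ha => by rw [hs]; exact hvE a ha
  have hee := hCC e he e he
  -- decomposition of `E^⊥`
  have hdec : ∀ x, (∀ a ∈ E, B a x = 0) → ∃ a ∈ E, ∃ s r : F, x = a + s • v + r • e := by
    intro x hx
    have hy : x - B e x • v - B v x • e ∈ C := by
      rw [hC]
      intro y hy
      obtain ⟨a, ha, t, rfl⟩ := hspan y hy
      change B _ _ = 0
      simp [hx a ha, hvE a ha, hCC a (hE ha) e he, hev, hee]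
    obtain ⟨a, ha, t, hat⟩ := hspan _ hy
    have h0 : B v (x - B e x • v - B v x • e) = 0 := by simp [hvv, hve]
    rw [hat] at h0
    simp [hvE' a ha, hve] at h0
    refine ⟨a, ha, B e x, B v x, ?_⟩
    rw [h0, zero_smul, add_zero] at hat
    rw [← hat]
    abel
  have hmem : ∀ x, x ∈ E ⊔ Submodule.span F {v} ↔ ∃ a ∈ E, ∃ s : F, x = a + s • v := by
    intro x
    constructor
    · intro h
      obtain ⟨a, ha, z, hz, rfl⟩ := Submodule.mem_sup.1 h
      obtain ⟨t, rfl⟩ := Submodule.mem_span_singleton.1 hz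
      exact ⟨a, ha, t, rfl⟩
    · rintro ⟨a, ha, s, rfl⟩
      exact Submodule.add_mem_sup ha (Submodule.smul_mem _ _ (Submodule.mem_span_singleton_self v))
  have hDself : E ⊔ Submodule.span F {v} = B.orthogonal (E ⊔ Submodule.span F {v}) := by
    apply le_antisymm
    · intro x hx y hy
      obtain ⟨a, ha, s, rfl⟩ := (hmem x).1 hx
      obtain ⟨b, hb, t, rfl⟩ := (hmem y).1 hy
      change B _ _ = 0
      simp [hvE b hb, hvE' a ha, hvv, hCC b (hE hb) a (hE ha)]
    · intro x hx
      have hx' : ∀ y ∈ E ⊔ Submodule.span F {v}, B y x = 0 := hx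
      obtain ⟨a, ha, s, r, rfl⟩ := hdec x fun a ha => hx' a (Submodule.mem_sup_left ha)
      have := hx' v (Submodule.mem_sup_right (Submodule.mem_span_singleton_self v))
      simp [hvE' a ha, hvv, hve] at this
      subst this
      exact (hmem _).2 ⟨a, ha, s, by simp⟩
  refine ⟨E ⊔ Submodule.span F {v}, ⟨hDself, ?_⟩, ?_⟩
  · apply le_antisymm
    · rintro x ⟨hx, hxC⟩
      obtain ⟨a, ha, s, rfl⟩ := (hmem x).1 hx
      have := hCC e he _ hxC
      simp [hCC e he a (hE ha), hev] at this
      simpa [this] using ha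
    · exact le_inf le_sup_left hE
  · rintro D ⟨hD, hDC⟩
    have hED : E ≤ D := hDC ▸ inf_le_left
    have hDD : ∀ x ∈ D, ∀ y ∈ D, B x y = 0 := by
      intro x hx y hy
      rw [hD] at hy
      exact hy x hx
    have hle : D ≤ E ⊔ Submodule.span F {v} := by
      intro x hx
      by_cases hxC : x ∈ C
      · exact Submodule.mem_sup_left (hDC ▸ ⟨hx, hxC⟩)
      · have hxx := hDD x hx x hx
        obtain ⟨a, ha, s, r, rfl⟩ := hdec x fun a ha => hDD a (hED ha) x hx
        have hs0 : s ≠ 0 := by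
          rintro rfl
          apply hxC
          simpa using C.add_mem (hE ha) (C.smul_mem r he)
        have h3 : 2 * (s * r) = 0 := by
          simp [hvE a ha, hvE' a ha, hvv, hve, hev, hee, hCC a (hE ha) a (hE ha),
            hCC a (hE ha) e he, hCC e he a (hE ha)] at hxx
          linear_combination hxx
        have hr0 : r = 0 := by simpa [h2, hs0] using h3
        exact (hmem _).2 ⟨a, ha, s, by simp [hr0]⟩
    apply le_antisymm hle
    rw [hD, hDself]
    exact LinearMap.BilinForm.orthogonal_le hle

lemma aux_hyperplanes {F V : Type*} [Field F] [Fintype F] [AddCommGroup V] [Module F V]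
    [FiniteDimensional F V] (S : Submodule F V) :
    Nat.card {E : Submodule F V // finrank F E + 1 = finrank F V ∧ S ≤ E} =
      (Fintype.card F ^ (finrank F V - finrank F S) - 1) / (Fintype.card F - 1) := by
  have hA : finrank F S.dualAnnihilator = finrank F V - finrank F S := by
    have := Subspace.finrank_add_finrank_dualAnnihilator_eq S
    omega
  have hcard := Projectivization.card'' F S.dualAnnihilator
  rw [Module.natCard_eq_pow_finrank (K := F) (V := S.dualAnnihilator), hA,
    Nat.card_eq_fintype_card (α := F)] at hcard
  rw [← hcard]
  symm
  rw [Nat.card_congr (Projectivization.equivSubmodule F S.dualAnnihilator)]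
  refine Nat.card_congr (Equiv.ofBijective (fun L =>
    ⟨(L.1.map S.dualAnnihilator.subtype).dualCoannihilator, ?_, ?_⟩) ⟨?_, ?_⟩)
  · have h1 := Subspace.finrank_add_finrank_dualCoannihilator_eq
      (L.1.map S.dualAnnihilator.subtype)
    rw [Submodule.finrank_map_subtype_eq, L.2] at h1
    omega
  · rw [← Submodule.le_dualAnnihilator_iff_le_dualCoannihilator]
    exact Submodule.map_subtype_le _ _
  · rintro ⟨L, hL⟩ ⟨L', hL'⟩ h
    have h := congrArg (fun E => Submodule.dualAnnihilator E.1) h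
    simp only [Subspace.dualCoannihilator_dualAnnihilator_eq] at h
    exact Subtype.ext (Submodule.map_injective_of_injective
      (Submodule.injective_subtype _) h)
  · rintro ⟨E, hE, hS⟩
    have hle : E.dualAnnihilator ≤ S.dualAnnihilator := Submodule.dualAnnihilator_anti hS
    have hmap : (E.dualAnnihilator.comap S.dualAnnihilator.subtype).map
        S.dualAnnihilator.subtype = E.dualAnnihilator := by
      rw [Submodule.map_comap_subtype, inf_of_le_right hle]
    refine ⟨⟨E.dualAnnihilator.comap S.dualAnnihilator.subtype, ?_⟩, ?_⟩
    · rw [← Submodule.finrank_map_subtype_eq, hmap]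
      have := Subspace.finrank_add_finrank_dualAnnihilator_eq E
      omega
    · apply Subtype.ext
      simp only [hmap, Subspace.dualAnnihilator_dualCoannihilator_eq]

end helpers

/-- For `q` odd, a self-dual code `C ≤ F_q^{2n}` and linearly independent
`c^(1), …, c^(m) ∈ C` (`m ≤ n`), the number of pairs `(E, D)` with `E ≤ C` of dimension
`n-1` containing all `c^(i)` and `D` self-dual with `D ∩ C = E` equals
`(q^{n-m} - 1)/(q - 1)`. -/
theorem sum_alphaE_qE
    {F : Type} [Field F] [Fintype F] (hq : Odd (Fintype.card F)) {n : ℕ}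
    (C : Submodule F (Fin (2 * n) → F)) (hC : C = dualCode (id : F → F) C)
    {m : ℕ} (hm : m ≤ n) (c : Fin m → (Fin (2 * n) → F)) (hc : ∀ j, c j ∈ C)
    (hind : LinearIndependent F c) :
    Nat.card {ED : Submodule F (Fin (2 * n) → F) × Submodule F (Fin (2 * n) → F) //
        ED.1 ≤ C ∧ Module.finrank F ↥ED.1 + 1 = n ∧ (∀ j, c j ∈ ED.1) ∧
        ED.2 = dualCode (id : F → F) ED.2 ∧ ED.2 ⊓ C = ED.1} =
      (Fintype.card F ^ (n - m) - 1) / (Fintype.card F - 1) := by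
  classical
  have h2 : (2 : F) ≠ 0 := by
    intro h
    have h2 := FiniteField.even_card_iff_char_two (F := F)
    have : ringChar F = 2 := by
      have := CharTwo.of_one_ne_zero_of_two_eq_zero (one_ne_zero : (1 : F) ≠ 0) h
      exact ringChar.eq F 2
    have := h2.1 this
    rw [Nat.odd_iff] at hq
    omega
  let B : LinearMap.BilinForm F (Fin (2 * n) → F) := Matrix.toBilin' 1
  have hBa : ∀ x y, B x y = ∑ i, x i * y i := by
    intro x y
    simp [B, Matrix.toBilin'_apply', dotProduct]
  have hs : ∀ x y, B x y = B y x := by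
    intro x y
    simp only [hBa, mul_comm]
  have hB : B.Nondegenerate := by
    apply Matrix.Nondegenerate.toBilin'
    exact Matrix.nondegenerate_of_det_ne_zero (by simp)
  have hdual : ∀ D : Submodule F (Fin (2 * n) → F), dualCode (id : F → F) D = B.orthogonal D := by
    intro D
    ext v
    change (∀ c ∈ D, ∑ i, v i * c i = 0) ↔ ∀ c ∈ D, B c v = 0
    simp only [hBa, mul_comm]
  simp only [hdual] at hC ⊢
  have hCn : Module.finrank F C = n := by
    have h1 := LinearMap.BilinForm.finrank_orthogonal hB C
    rw [← hC] at h1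
    have h3 := Submodule.finrank_le C
    simp at h1 h3
    omega
  let c' : Fin m → C := fun j => ⟨c j, hc j⟩
  have hc' : LinearIndependent F c' := LinearIndependent.of_comp C.subtype hind
  have hS : Module.finrank F (Submodule.span F (Set.range c')) = m := by
    simpa using finrank_span_eq_card hc'
  have key := aux_hyperplanes (Submodule.span F (Set.range c'))
  rw [hS, hCn] at key
  rw [← key]
  refine Nat.card_congr (Equiv.ofBijective (fun ED =>
    ⟨ED.1.1.comap C.subtype, ?_, ?_⟩) ⟨?_, ?_⟩)
  · rw [← Submodule.finrank_map_subtype_eq, Submodule.map_comap_subtype,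
      inf_of_le_right ED.2.1]
    exact ED.2.2.1
  · rw [Submodule.span_le]
    rintro _ ⟨j, rfl⟩
    exact ED.2.2.2.1 j
  · rintro ⟨⟨E, D⟩, hE, hn, hcE, hD, hDC⟩ ⟨⟨E', D'⟩, hE', hn', hcE', hD', hDC'⟩ h
    have h := congrArg (fun E => Submodule.map C.subtype E.1) h
    simp only [Submodule.map_comap_subtype] at h
    simp only at hE hE' hn hD hD' hDC hDC'
    rw [inf_of_le_right hE, inf_of_le_right hE'] at h
    subst h
    have := (aux_existsUnique h2 B hB hs C E hC hE (by omega)).unique ⟨hD, hDC⟩ ⟨hD', hDC'⟩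
    subst this
    rfl
  · rintro ⟨E, hE, hSE⟩
    have hn : Module.finrank F (E.map C.subtype) + 1 = n := by
      rw [Submodule.finrank_map_subtype_eq]; exact hE
    obtain ⟨D, ⟨hD, hDC⟩, -⟩ := aux_existsUnique h2 B hB hs C (E.map C.subtype) hC
      (Submodule.map_subtype_le _ _) (by omega)
    refine ⟨⟨(E.map C.subtype, D), Submodule.map_subtype_le _ _, hn, ?_, hD, hDC⟩, ?_⟩
    · intro j
      exact ⟨c' j, hSE (Submodule.subset_span ⟨j, rfl⟩), rfl⟩
    · apply Subtype.ext
      exact Submodule.comap_map_eq_of_injective (Submodule.injective_subtype _) E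
end
end

section
/- Let q be even, let C = C^⊥ ≤ F_q^{2n} be a self-dual code, let 0 ≤ m ≤ n−1, and let c^(1), …, c^(m) ∈ C satisfy dim⟨1, c^(1), …, c^(m)⟩ = m+1, where 1 = (1,…,1) is the all-ones vector. Then Σ_E #{D ≤ F_q^{2n} : D = D^⊥ and D ∩ C = E} = q·(q^{n−m−1} − 1)/(q − 1), where the sum runs over all subspaces E ≤ C with dim E = n−1 and c^(i) ∈ E for all i. -/
noncomputable section

open KneserHeckeCodes

lemma mem_dualCode_iff {F : Type} [Field F] [Fintype F] {N : ℕ} (C : Submodule F (Fin N → F))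
    (v : Fin N → F) : v ∈ dualCode (id : F → F) C ↔ ∀ c ∈ C, v ⬝ᵥ c = 0 := Iff.rfl

lemma finrank_dual_add {F : Type} [Field F] [Fintype F] {N : ℕ} (C : Submodule F (Fin N → F)) :
    Module.finrank F C + Module.finrank F (dualCode (id : F → F) C) = N := by
  let B : LinearMap.BilinForm F (Fin N → F) := dotProductBilin F F
  have hker : LinearMap.ker B = ⊥ := by
    rw [eq_bot_iff]
    intro x hx
    rw [Submodule.mem_bot]
    apply dotProduct_eq_zero
    intro w
    exact congrArg (fun f => f w) (LinearMap.mem_ker.1 hx)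
  have h := LinearMap.BilinForm.finrank_add_finrank_orthogonal' (B := B) C
  have h2 : B.orthogonal C = dualCode (id : F → F) C := by
    ext v
    rw [mem_dualCode_iff, LinearMap.BilinForm.mem_orthogonal_iff]
    refine forall₂_congr fun c _ => ?_
    rw [dotProduct_comm]
    rfl
  rw [hker, inf_bot_eq, finrank_bot, h2] at h
  simpa using h

lemma dual_le_dual {F : Type} [Field F] [Fintype F] {N : ℕ} {C D : Submodule F (Fin N → F)}
    (h : C ≤ D) : dualCode (id : F → F) D ≤ dualCode (id : F → F) C :=
  fun _ hv c hc => hv c (h hc)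

lemma finrank_selfdual {F : Type} [Field F] [Fintype F] {n : ℕ}
    {C : Submodule F (Fin (2 * n) → F)} (hC : C = dualCode (id : F → F) C) :
    Module.finrank F C = n := by
  have h := finrank_dual_add C
  rw [← hC] at h
  omega

lemma selfdual_of_le {F : Type} [Field F] [Fintype F] {n : ℕ}
    {C : Submodule F (Fin (2 * n) → F)} (hC : C ≤ dualCode (id : F → F) C)
    (hn : n ≤ Module.finrank F C) : C = dualCode (id : F → F) C := by
  have h := finrank_dual_add C
  exact Submodule.eq_of_le_of_finrank_le hC (by omega)

lemma dot_self_even {F : Type} [Field F] [Fintype F] (hq : Even (Fintype.card F)) {N : ℕ}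
    (v : Fin N → F) : v ⬝ᵥ v = (v ⬝ᵥ allOnes F N) ^ 2 := by
  have : CharP F 2 := by
    have h := FiniteField.even_card_iff_char_two.2 (Nat.even_iff.1 hq)
    exact ringChar.of_eq h
  simp only [dotProduct, allOnes, mul_one, CharTwo.sum_sq]
  exact Finset.sum_congr rfl fun i _ => (sq _).symm

lemma ones_mem_selfdual {F : Type} [Field F] [Fintype F] (hq : Even (Fintype.card F)) {N : ℕ}
    {C : Submodule F (Fin N → F)} (hC : C = dualCode (id : F → F) C) : allOnes F N ∈ C := by
  rw [hC, mem_dualCode_iff]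
  intro c hc
  have h1 : c ⬝ᵥ c = 0 := by
    have := hc
    rw [hC, mem_dualCode_iff] at this
    exact this c hc
  rw [dot_self_even hq] at h1
  rw [dotProduct_comm]
  exact pow_eq_zero_iff (two_ne_zero) |>.1 h1

lemma mem_dual_span {F : Type} [Field F] [Fintype F] {N : ℕ} (v w : Fin N → F) :
    w ∈ dualCode (id : F → F) (Submodule.span F {v}) ↔ w ⬝ᵥ v = 0 := by
  rw [mem_dualCode_iff]
  constructor
  · intro h
    exact h v (Submodule.mem_span_singleton_self v)
  · intro h c hc
    obtain ⟨a, rfl⟩ := Submodule.mem_span_singleton.1 hc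
    rw [dotProduct_smul, h, smul_zero]

lemma finrank_inf_dual_span {F : Type} [Field F] [Fintype F] {n : ℕ}
    {C : Submodule F (Fin (2 * n) → F)} (hC : C = dualCode (id : F → F) C)
    {v : Fin (2 * n) → F} (hv : v ∉ C) :
    Module.finrank F ↥(C ⊓ dualCode (id : F → F) (Submodule.span F {v})) + 1 = n := by
  have h0 := finrank_selfdual hC
  have h1 := finrank_dual_add (Submodule.span F {v})
  have hv0 : v ≠ 0 := fun h => hv (h ▸ C.zero_mem)
  rw [finrank_span_singleton hv0] at h1
  have h2 := Submodule.finrank_sup_add_finrank_inf_eq C (dualCode (id : F → F) (Submodule.span F {v}))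
  have h3 := Submodule.finrank_le (C ⊔ dualCode (id : F → F) (Submodule.span F {v}))
  rw [Module.finrank_fin_fun] at h3
  have h4 : C ⊓ dualCode (id : F → F) (Submodule.span F {v}) < C := by
    refine lt_of_le_of_ne inf_le_left fun h => hv ?_
    rw [inf_eq_left] at h
    rw [hC, mem_dualCode_iff]
    intro c hc
    have := (mem_dual_span v c).1 (h hc)
    rwa [dotProduct_comm]
  have h5 := Submodule.finrank_lt_finrank_of_lt h4
  omega

lemma finrank_sup_span {F : Type} [Field F] {N : ℕ}
    {E : Submodule F (Fin N → F)} {v : Fin N → F} (hv : v ∉ E) :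
    Module.finrank F ↥(E ⊔ Submodule.span F {v}) = Module.finrank F E + 1 := by
  have hv0 : v ≠ 0 := fun h => hv (h ▸ E.zero_mem)
  have h2 := Submodule.finrank_sup_add_finrank_inf_eq E (Submodule.span F {v})
  have h3 : E ⊓ Submodule.span F {v} = ⊥ :=
    ((Submodule.disjoint_span_singleton' hv0).2 hv).eq_bot
  rw [h3, finrank_bot, finrank_span_singleton hv0] at h2
  omega

/-- Uniqueness of the neighbour of `C` through `v`. -/
lemma neighbour_unique {F : Type} [Field F] [Fintype F] {n : ℕ}
    {C D : Submodule F (Fin (2 * n) → F)} (hC : C = dualCode (id : F → F) C)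
    (hD : D = dualCode (id : F → F) D) (hr : Module.finrank F ↥(D ⊓ C) + 1 = n)
    {v : Fin (2 * n) → F} (hv : v ∉ C) (hvD : v ∈ D) :
    D = (C ⊓ dualCode (id : F → F) (Submodule.span F {v})) ⊔ Submodule.span F {v} := by
  have h1 := finrank_inf_dual_span hC hv
  have h2 : D ⊓ C = C ⊓ dualCode (id : F → F) (Submodule.span F {v}) := by
    refine Submodule.eq_of_le_of_finrank_le (fun x hx => ⟨hx.2, ?_⟩) (by omega)
    apply (mem_dual_span _ _).2
    have := hx.1
    rw [hD] at this
    exact this v hvD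
  have hvE : v ∉ C ⊓ dualCode (id : F → F) (Submodule.span F {v}) := fun h => hv h.1
  symm
  apply Submodule.eq_of_le_of_finrank_le
  · rw [← h2]
    exact sup_le inf_le_left ((Submodule.span_singleton_le_iff_mem _ _).2 hvD)
  · rw [finrank_sup_span hvE, finrank_selfdual hD]
    omega

/-- Existence of the neighbour of `C` through `v`. -/
lemma neighbour_exists {F : Type} [Field F] [Fintype F] {n : ℕ}
    {C : Submodule F (Fin (2 * n) → F)} (hC : C = dualCode (id : F → F) C)
    {v : Fin (2 * n) → F} (hv : v ∉ C) (hvv : v ⬝ᵥ v = 0) :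
    (C ⊓ dualCode (id : F → F) (Submodule.span F {v})) ⊔ Submodule.span F {v} =
      dualCode (id : F → F)
        ((C ⊓ dualCode (id : F → F) (Submodule.span F {v})) ⊔ Submodule.span F {v}) ∧
    ((C ⊓ dualCode (id : F → F) (Submodule.span F {v})) ⊔ Submodule.span F {v}) ⊓ C =
      C ⊓ dualCode (id : F → F) (Submodule.span F {v}) := by
  have h1 := finrank_inf_dual_span hC hv
  have hvE : v ∉ C ⊓ dualCode (id : F → F) (Submodule.span F {v}) := fun h => hv h.1
  constructor
  · apply selfdual_of_le
    · intro x hx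
      rw [mem_dualCode_iff]
      intro y hy
      obtain ⟨e, he, a, ha, rfl⟩ := Submodule.mem_sup.1 hx
      obtain ⟨e', he', a', ha', rfl⟩ := Submodule.mem_sup.1 hy
      obtain ⟨s, rfl⟩ := Submodule.mem_span_singleton.1 ha
      obtain ⟨t, rfl⟩ := Submodule.mem_span_singleton.1 ha'
      have e1 := (mem_dual_span v e).1 he.2
      have e2 := (mem_dual_span v e').1 he'.2
      have e3 : e ⬝ᵥ e' = 0 := by
        have := he.1
        rw [hC] at this
        exact this e' he'.1
      rw [dotProduct_comm] at e2
      simp [add_dotProduct, dotProduct_add, e1, e2, e3, hvv]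
    · rw [finrank_sup_span hvE]
      omega
  · rw [sup_inf_assoc_of_le _ (inf_le_left : C ⊓ dualCode (id : F → F) (Submodule.span F {v}) ≤ C)]
    have hv0 : v ≠ 0 := fun h => hv (h ▸ C.zero_mem)
    have h3 : Submodule.span F {v} ⊓ C = ⊥ :=
      ((Submodule.disjoint_span_singleton' hv0).2 hv).symm.eq_bot
    rw [h3, sup_bot_eq]

lemma card_diff {F : Type} [Field F] [Fintype F] {N : ℕ} (A B : Submodule F (Fin N → F)) :
    Nat.card {v : Fin N → F // v ∈ A ∧ v ∉ B} + Fintype.card F ^ Module.finrank F ↥(A ⊓ B) =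
      Fintype.card F ^ Module.finrank F A := by
  classical
  have h1 := Module.natCard_eq_pow_finrank (K := F) (V := A)
  have h2 := Module.natCard_eq_pow_finrank (K := F) (V := ↥(A ⊓ B))
  rw [Nat.card_eq_fintype_card (α := F)] at h1 h2
  rw [← h1, ← h2, add_comm]
  have h3 := Set.ncard_inter_add_ncard_sdiff_eq_ncard (A : Set (Fin N → F)) (B : Set (Fin N → F))
    (Set.toFinite _)
  exact h3

lemma final_arith (K q n m : ℕ) (hq : 2 ≤ q) (hm : m + 1 ≤ n)
    (h : K * (q ^ n - q ^ (n - 1)) = q ^ (2 * n - (m + 1)) - q ^ n) :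
    K = q * ((q ^ (n - m - 1) - 1) / (q - 1)) := by
  obtain ⟨k, rfl⟩ := Nat.exists_eq_add_of_le hm
  have e1 : m + 1 + k - m - 1 = k := by omega
  have e2 : m + 1 + k - 1 = m + k := by omega
  have e3 : 2 * (m + 1 + k) - (m + 1) = (m + 1 + k) + k := by omega
  rw [e2, e3] at h
  rw [e1]
  obtain ⟨G, hG⟩ : q - 1 ∣ q ^ k - 1 := by simpa using Nat.sub_dvd_pow_sub_pow q 1 k
  have hq1 : 0 < q - 1 := by omega
  rw [hG, Nat.mul_div_cancel_left _ hq1]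
  have f1 : q ^ (m + 1 + k) - q ^ (m + k) = q ^ (m + k) * (q - 1) := by
    rw [Nat.mul_sub, mul_one, ← pow_succ]; congr 2; omega
  have f2 : q ^ (m + 1 + k + k) - q ^ (m + 1 + k) = q ^ (m + k) * q * ((q - 1) * G) := by
    have g1 : m + 1 + k = m + k + 1 := by omega
    rw [← hG, Nat.mul_sub, mul_one, ← pow_succ, ← pow_add, g1]
  rw [f1, f2] at h
  have hp : 0 < q ^ (m + k) * (q - 1) := by positivity
  apply Nat.eq_of_mul_eq_mul_right hp
  rw [h]; ring

/-- For `q` even, a self-dual code `C ≤ F_q^{2n}` and `c^(1), …, c^(m) ∈ C`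
with `dim⟨1, c^(1), …, c^(m)⟩ = m + 1` (`m ≤ n - 1`), the number of pairs `(E, D)` with
`E ≤ C` of dimension `n-1` containing all `c^(i)` and `D` self-dual with `D ∩ C = E`
equals `q·(q^{n-m-1} - 1)/(q - 1)`. -/
theorem sum_alphaE_qEI
    {F : Type} [Field F] [Fintype F] (hq : Even (Fintype.card F)) {n : ℕ}
    (C : Submodule F (Fin (2 * n) → F)) (hC : C = dualCode (id : F → F) C)
    {m : ℕ} (hm : m + 1 ≤ n) (c : Fin m → (Fin (2 * n) → F)) (hc : ∀ j, c j ∈ C)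
    (hrank : Module.finrank F
      ↥(Submodule.span F (insert (allOnes F (2 * n)) (Set.range c))) = m + 1) :
    Nat.card {ED : Submodule F (Fin (2 * n) → F) × Submodule F (Fin (2 * n) → F) //
        ED.1 ≤ C ∧ Module.finrank F ↥ED.1 + 1 = n ∧ (∀ j, c j ∈ ED.1) ∧
        ED.2 = dualCode (id : F → F) ED.2 ∧ ED.2 ⊓ C = ED.1} =
      Fintype.card F * ((Fintype.card F ^ (n - m - 1) - 1) / (Fintype.card F - 1)) := by
  classical
  set P := {ED : Submodule F (Fin (2 * n) → F) × Submodule F (Fin (2 * n) → F) //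
        ED.1 ≤ C ∧ Module.finrank F ↥ED.1 + 1 = n ∧ (∀ j, c j ∈ ED.1) ∧
        ED.2 = dualCode (id : F → F) ED.2 ∧ ED.2 ⊓ C = ED.1} with hP
  set S := Submodule.span F (insert (allOnes F (2 * n)) (Set.range c)) with hS
  have hone : allOnes F (2 * n) ∈ S := Submodule.subset_span (Set.mem_insert _ _)
  have hSC : S ≤ C := by
    rw [hS, Submodule.span_le]
    rintro x (rfl | ⟨j, rfl⟩)
    · exact ones_mem_selfdual hq hC
    · exact hc j
  have hCS : C ≤ dualCode (id : F → F) S := by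
    conv_lhs => rw [hC]
    exact dual_le_dual hSC
  have hSD : ∀ p : P, S ≤ p.1.2 := by
    rintro ⟨⟨E, D⟩, h1, h2, h3, h4, h5⟩
    rw [hS, Submodule.span_le]
    rintro x (rfl | ⟨j, rfl⟩)
    · exact ones_mem_selfdual hq h4
    · have := h3 j
      rw [← h5] at this
      exact this.1
  let g : (Σ p : P, {v : Fin (2 * n) → F // v ∈ p.1.2 ∧ v ∉ C}) →
      {v : Fin (2 * n) → F // v ∈ dualCode (id : F → F) S ∧ v ∉ C} :=
    fun x => ⟨x.2.1, by
      exact dual_le_dual (hSD x.1) (x.1.2.2.2.2.1.le x.2.2.1), x.2.2.2⟩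
  have hg : Function.Bijective g := by
    constructor
    · rintro ⟨⟨⟨E, D⟩, h1, h2, h3, h4, h5⟩, v, hv, hvC⟩
        ⟨⟨⟨E', D'⟩, h1', h2', h3', h4', h5'⟩, v', hv', hvC'⟩ hh
      have hvv : v = v' := congrArg Subtype.val hh
      subst hvv
      simp only at h1 h2 h3 h4 h5 h1' h2' h3' h4' h5' hv hv'
      have u1 := neighbour_unique hC h4 (by rw [h5]; exact h2) hvC hv
      have u2 := neighbour_unique hC h4' (by rw [h5']; exact h2') hvC hv'
      have hDD : D = D' := u1.trans u2.symm
      subst hDD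
      have hEE : E = E' := h5.symm.trans h5'
      subst hEE
      rfl
    · rintro ⟨v, hv, hvC⟩
      have hvv : v ⬝ᵥ v = 0 := by
        rw [dot_self_even hq, (mem_dualCode_iff S v).1 hv _ hone]
        simp
      obtain ⟨n1, n2⟩ := neighbour_exists hC hvC hvv
      refine ⟨⟨⟨⟨C ⊓ dualCode (id : F → F) (Submodule.span F {v}), _⟩,
        inf_le_left, finrank_inf_dual_span hC hvC, ?_, n1, n2⟩, v, ?_, hvC⟩, rfl⟩
      · intro j
        refine ⟨hc j, ?_⟩
        apply (mem_dual_span _ _).2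
        rw [dotProduct_comm]
        exact hv _ (Submodule.subset_span (Set.mem_insert_of_mem _ ⟨j, rfl⟩))
      · exact Submodule.mem_sup_right (Submodule.mem_span_singleton_self v)
  have hcard := Nat.card_eq_of_bijective g hg
  have : Fintype P := Fintype.ofFinite P
  rw [Nat.card_sigma] at hcard
  have hfib : ∀ p : P, Nat.card {v : Fin (2 * n) → F // v ∈ p.1.2 ∧ v ∉ C} =
      Fintype.card F ^ n - Fintype.card F ^ (n - 1) := by
    rintro ⟨⟨E, D⟩, h1, h2, h3, h4, h5⟩
    have h := card_diff D C
    have e : Module.finrank F ↥(D ⊓ C) = n - 1 := by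
      simp only at h2 h5
      rw [h5]; omega
    rw [e, finrank_selfdual h4] at h
    exact Nat.eq_sub_of_add_eq h
  rw [Finset.sum_congr rfl (fun p _ => hfib p), Finset.sum_const, smul_eq_mul,
    Finset.card_univ, ← Nat.card_eq_fintype_card] at hcard
  have h := card_diff (dualCode (id : F → F) S) C
  have hd := finrank_dual_add S
  rw [inf_eq_right.2 hCS, finrank_selfdual hC] at h
  rw [hrank] at hd
  have hd' : Module.finrank F ↥(dualCode (id : F → F) S) = 2 * n - (m + 1) := by omega
  rw [hd'] at h
  rw [Nat.eq_sub_of_add_eq h] at hcard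
  exact final_arith _ _ n m Fintype.one_lt_card hm hcard
end
end

section
/- Let q be odd, let C = C^⊥ ≤ F_q^{2n} be a self-dual code containing the all-ones vector 1 = (1,…,1), let 0 ≤ m ≤ n−1, and let c^(1), …, c^(m) ∈ C satisfy dim⟨1, c^(1), …, c^(m)⟩ = m+1. Then Σ_E #{D ≤ F_q^{2n} : D = D^⊥, 1 ∈ D, and D ∩ C = E} = (q^{n−m−1} − 1)/(q − 1), where the sum runs over all subspaces E ≤ C with dim E = n−1 and c^(i) ∈ E for all i. -/
noncomputable section

open KneserHeckeCodes

namespace KneserAux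

open Module

theorem count_between {K V : Type} [Field K] [Finite K] [AddCommGroup V] [Module K V]
    [FiniteDimensional K V] (A B : Submodule K V) (hAB : A ≤ B) (k : ℕ)
    (hk : finrank K A + k = finrank K B) :
    Nat.card {U : Submodule K V // A ≤ U ∧ U ≤ B ∧ finrank K U = finrank K A + 1}
      = (Nat.card K ^ k - 1) / (Nat.card K - 1) := by
  have hA' : finrank K (A.comap B.subtype) = finrank K A :=
    (Submodule.comapSubtypeEquivOfLe hAB).finrank_eq
  set A' := A.comap B.subtype with hA'def
  have hQ : finrank K (B ⧸ A') = k := by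
    have := Submodule.finrank_quotient_add_finrank A'
    omega
  have hQc : Nat.card (B ⧸ A') = Nat.card K ^ k := by
    rw [Module.natCard_eq_pow_finrank (K := K), hQ]
  rw [← hQc, ← Projectivization.card'' K (B ⧸ A'),
    Nat.card_congr (Projectivization.equivSubmodule K (B ⧸ A'))]
  symm
  have hmem : ∀ H : Submodule K (B ⧸ A'),
      finrank K ((H.comap A'.mkQ).map B.subtype) = finrank K A + finrank K H := by
    intro H
    have h1 : finrank K ((H.comap A'.mkQ).map B.subtype) = finrank K (H.comap A'.mkQ) :=
      (Submodule.equivMapOfInjective _ B.subtype_injective _).finrank_eq.symm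
    have h2 := LinearMap.finrank_range_add_finrank_ker (A'.mkQ.domRestrict (H.comap A'.mkQ))
    have hle : A' ≤ H.comap A'.mkQ := Submodule.le_comap_mkQ _ _
    have h3 : finrank K (LinearMap.ker (A'.mkQ.domRestrict (H.comap A'.mkQ))) = finrank K A' := by
      rw [LinearMap.ker_domRestrict, Submodule.ker_mkQ]
      exact (Submodule.comapSubtypeEquivOfLe hle).finrank_eq
    have h4 : LinearMap.range (A'.mkQ.domRestrict (H.comap A'.mkQ)) = H := by
      rw [LinearMap.range_domRestrict, Submodule.map_comap_eq_of_surjective A'.mkQ_surjective]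
    rw [h4] at h2
    omega
  refine Nat.card_eq_of_bijective (fun H => ⟨(H.1.comap A'.mkQ).map B.subtype, ?_, ?_, ?_⟩) ⟨?_, ?_⟩
  · intro x hx
    refine ⟨⟨x, hAB hx⟩, ?_, rfl⟩
    have : A'.mkQ ⟨x, hAB hx⟩ = 0 := by
      rw [← LinearMap.mem_ker, Submodule.ker_mkQ]; exact hx
    simp only [SetLike.mem_coe, Submodule.mem_comap, this, Submodule.zero_mem]
  · exact Submodule.map_subtype_le _ _
  · rw [hmem, H.2]
  · intro H1 H2 h
    have h := congrArg Subtype.val h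
    simp only at h
    have h := Submodule.map_injective_of_injective B.subtype_injective h
    exact Subtype.ext (Submodule.comap_injective_of_surjective A'.mkQ_surjective h)
  · rintro ⟨U, h1, h2, h3⟩
    have key : (((U.comap B.subtype).map A'.mkQ).comap A'.mkQ).map B.subtype = U := by
      rw [Submodule.comap_map_mkQ, sup_eq_right.2 (Submodule.comap_mono h1),
        Submodule.map_comap_subtype, inf_eq_right.2 h2]
    refine ⟨⟨(U.comap B.subtype).map A'.mkQ, ?_⟩, Subtype.ext key⟩
    have := hmem ((U.comap B.subtype).map A'.mkQ)
    rw [key] at this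
    omega

section
variable {K V : Type} [Field K] [AddCommGroup V] [Module K V]
    [FiniteDimensional K V] (b : LinearMap.BilinForm K V)

theorem sup_span_eq {E D : Submodule K V} (hED : E ≤ D) (h : finrank K E + 1 = finrank K D)
    {d : V} (hd : d ∈ D) (hdE : d ∉ E) : E ⊔ K ∙ d = D := by
  refine Submodule.eq_of_le_of_finrank_le (sup_le hED (by simpa using hd)) ?_
  have : E < E ⊔ K ∙ d := by
    refine lt_of_le_of_ne le_sup_left fun h => hdE ?_
    rw [h]; exact Submodule.mem_sup_right (Submodule.mem_span_singleton_self d)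
  have := Submodule.finrank_lt_finrank_of_lt this
  omega

theorem le_of_sup_eq (h2 : (2 : K) ≠ 0) (hs : ∀ x y, b x y = b y x)
    {C D D' : Submodule K V} (hC : b.orthogonal C = C)
    (hD : b.orthogonal D = D) (hD' : b.orthogonal D' = D')
    (hdim : finrank K (D ⊓ C : Submodule K V) + 1 = finrank K D)
    (hE : D ⊓ C = D' ⊓ C) (hU : D ⊔ C = D' ⊔ C) : D' ≤ D := by
  intro d' hd'
  have iso : ∀ X : Submodule K V, b.orthogonal X = X → ∀ x ∈ X, ∀ y ∈ X, b x y = 0 := by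
    intro X hX x hx y hy
    rw [← hX] at hy
    exact hy x hx
  by_cases hdC : d' ∈ C
  · have : d' ∈ D ⊓ C := by rw [hE]; exact ⟨hd', hdC⟩
    exact this.1
  have : d' ∈ D ⊔ C := by rw [hU]; exact Submodule.mem_sup_left hd'
  obtain ⟨d, hd, c, hc, rfl⟩ := Submodule.mem_sup.1 this
  have hdC' : d ∉ C := fun h => hdC (C.add_mem h hc)
  have hb : b d c = 0 := by
    have h0 := iso D' hD' _ hd' _ hd'
    simp only [map_add, LinearMap.add_apply, iso D hD d hd d hd, iso C hC c hc c hc, hs c d] at h0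
    have : 2 * b d c = 0 := by linear_combination h0
    exact (mul_eq_zero.1 this).resolve_left h2
  refine D.add_mem hd ?_
  rw [← hD]
  intro x hx
  rw [← sup_span_eq inf_le_left hdim hd (fun h => hdC' h.2)] at hx
  obtain ⟨e, he, y, hy, rfl⟩ := Submodule.mem_sup.1 hx
  obtain ⟨a, rfl⟩ := Submodule.mem_span_singleton.1 hy
  change b (e + a • d) c = 0
  simp [iso C hC e he.2 c hc, hb]

theorem count_pairs [Finite K] (h2 : (2 : K) ≠ 0) (hs : ∀ x y, b x y = b y x)
    (hnd : b.Nondegenerate) {n m : ℕ} (hV : finrank K V = 2 * n)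
    (C W : Submodule K V) (hC : b.orthogonal C = C) (hW : W ≤ C)
    (hWr : finrank K W = m + 1) (hm : m + 1 ≤ n) :
    Nat.card {ED : Submodule K V × Submodule K V //
      finrank K ED.1 + 1 = n ∧ W ≤ ED.1 ∧ b.orthogonal ED.2 = ED.2 ∧ ED.2 ⊓ C = ED.1}
      = (Nat.card K ^ (n - m - 1) - 1) / (Nat.card K - 1) := by
  have hrefl : b.IsRefl := fun x y h => by rw [hs]; exact h
  have hfr : ∀ X : Submodule K V, finrank K X + finrank K (b.orthogonal X) = 2 * n := by
    intro X
    have h1 := LinearMap.BilinForm.finrank_orthogonal hnd X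
    have h2 := Submodule.finrank_le X
    omega
  have hsd : ∀ X : Submodule K V, b.orthogonal X = X → finrank K X = n := by
    intro X hX
    have := hfr X
    rw [hX] at this; omega
  have iso : ∀ X : Submodule K V, b.orthogonal X = X → ∀ x ∈ X, ∀ y ∈ X, b x y = 0 := by
    intro X hX x hx y hy
    rw [← hX] at hy
    exact hy x hx
  have hCn := hsd C hC
  have hCW : C ≤ b.orthogonal W := by
    intro x hx w hw
    exact iso C hC w (hW hw) x hx
  have hWo := hfr W
  rw [← count_between C (b.orthogonal W) hCW (n - m - 1) (by omega)]
  have hfs : ∀ D : Submodule K V, b.orthogonal D = D → finrank K (D ⊓ C : Submodule K V) + 1 = n →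
      finrank K (D ⊔ C : Submodule K V) = n + 1 := by
    intro D hD h
    have := Submodule.finrank_sup_add_finrank_inf_eq D C
    have := hsd D hD
    omega
  have hEo : ∀ D : Submodule K V, b.orthogonal D = D → finrank K (D ⊓ C : Submodule K V) + 1 = n →
      D ⊓ C = b.orthogonal (D ⊔ C) := by
    intro D hD h
    refine Submodule.eq_of_le_of_finrank_le ?_ ?_
    · intro x hx y hy
      obtain ⟨d, hd, c, hc, rfl⟩ := Submodule.mem_sup.1 hy
      change b (d + c) x = 0
      simp [iso D hD d hd x hx.1, iso C hC c hc x hx.2]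
    · have := hfr (D ⊔ C)
      have := hfs D hD h
      omega
  refine Nat.card_eq_of_bijective (fun ED => ⟨ED.1.2 ⊔ C, le_sup_right, sup_le ?_ hCW, ?_⟩) ⟨?_, ?_⟩
  · obtain ⟨⟨E, D⟩, h1, h2, h3, h4⟩ := ED
    dsimp only at h1 h2 h3 h4 ⊢
    subst h4
    intro x hx w hw
    exact iso D h3 w (h2 hw).1 x hx
  · obtain ⟨⟨E, D⟩, h1, h2, h3, h4⟩ := ED
    dsimp only at h1 h2 h3 h4 ⊢
    subst h4
    rw [hfs D h3 h1, hCn]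
  · rintro ⟨⟨E, D⟩, h1, h2', h3, h4⟩ ⟨⟨E', D'⟩, h1', h2'', h3', h4'⟩ h
    simp only [Subtype.mk.injEq] at h
    dsimp only at h1 h2' h3 h4 h1' h2'' h3' h4'
    subst h4 h4'
    have hE : D ⊓ C = D' ⊓ C := by rw [hEo D h3 h1, hEo D' h3' h1', h]
    have : D = D' := le_antisymm
      (le_of_sup_eq b h2 hs hC h3' h3 (by rw [hsd D' h3', h1']) hE.symm h.symm)
      (le_of_sup_eq b h2 hs hC h3 h3' (by rw [hsd D h3, h1]) hE h)
    exact Subtype.ext (Prod.ext hE this)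
  · rintro ⟨U, hCU, hUW, hU⟩
    have hEU := hfr U
    have hEC : b.orthogonal U ≤ C := by
      rw [← hC]; exact fun x hx c hc => hx c (hCU hc)
    have hWE : W ≤ b.orthogonal U := fun w hw u hu => by
      change b u w = 0
      rw [hs]; exact hUW hu w hw
    obtain ⟨v, hvU, hvC⟩ : ∃ v ∈ U, v ∉ C := by
      by_contra! hcon
      have := Submodule.finrank_mono (show U ≤ C from hcon)
      omega
    obtain ⟨e, he, hev⟩ : ∃ e ∈ C, b e v ≠ 0 := by
      by_contra! hcon
      exact hvC (by rw [← hC]; exact hcon)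
    set t := b v v / (2 * b e v) with ht
    set d := v - t • e with hd
    have hdC : d ∉ C := fun h => hvC (by
      have := C.add_mem h (C.smul_mem t he)
      simpa [hd] using this)
    have hdU : d ∈ U := U.sub_mem hvU (U.smul_mem t (hCU he))
    have hdd : b d d = 0 := by
      have hte : t * (2 * b e v) = b v v := by rw [ht]; field_simp
      simp only [hd, map_sub, map_smul, LinearMap.sub_apply, LinearMap.smul_apply, smul_eq_mul,
        iso C hC e he e he, hs v e]
      linear_combination -hte
    have hdE : d ∉ b.orthogonal U := fun h => hdC (hEC h)
    set E := b.orthogonal U with hE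
    have hEl : E < E ⊔ K ∙ d := by
      refine lt_of_le_of_ne le_sup_left fun h => hdE ?_
      rw [h]; exact Submodule.mem_sup_right (Submodule.mem_span_singleton_self d)
    have hEl' := Submodule.finrank_lt_finrank_of_lt hEl
    have hDle : E ⊔ K ∙ d ≤ b.orthogonal (E ⊔ K ∙ d) := by
      intro x hx y hy
      obtain ⟨e1, he1, z, hz, rfl⟩ := Submodule.mem_sup.1 hx
      obtain ⟨a, rfl⟩ := Submodule.mem_span_singleton.1 hz
      obtain ⟨e2, he2, z, hz', rfl⟩ := Submodule.mem_sup.1 hy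
      obtain ⟨a', rfl⟩ := Submodule.mem_span_singleton.1 hz'
      change b (e2 + a' • d) (e1 + a • d) = 0
      have q1 : b e2 e1 = 0 := iso C hC _ (hEC he2) _ (hEC he1)
      have q2 : b e2 d = 0 := by rw [hs]; exact he2 d hdU
      have q3 : b d e1 = 0 := he1 d hdU
      simp [q1, q2, q3, hdd]
    set D := E ⊔ K ∙ d with hDdef
    have hDf := hfr D
    have hDn : D = b.orthogonal D := Submodule.eq_of_le_of_finrank_le hDle (by omega)
    have hDn' := hsd D hDn.symm
    have hdD : d ∈ D := Submodule.mem_sup_right (Submodule.mem_span_singleton_self d)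
    have hDC : D ⊓ C = E := by
      symm
      refine Submodule.eq_of_le_of_finrank_le (le_inf le_sup_left hEC) ?_
      have : D ⊓ C < D := lt_of_le_of_ne inf_le_left fun h => hdC (by rw [← h] at hdD; exact hdD.2)
      have := Submodule.finrank_lt_finrank_of_lt this
      omega
    have hDU : D ≤ U := sup_le (hEC.trans hCU) (by simpa using hdU)
    refine ⟨⟨(E, D), ?_, hWE, hDn.symm, hDC⟩, Subtype.ext ?_⟩
    · change finrank K E + 1 = n
      omega
    · change D ⊔ C = U
      refine Submodule.eq_of_le_of_finrank_le (sup_le hDU hCU) ?_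
      have := hfs D hDn.symm (by rw [hDC]; omega)
      omega

end

end KneserAux

/-- For `q` odd, a self-dual code `C ≤ F_q^{2n}` containing the all-ones
vector and `c^(1), …, c^(m) ∈ C` with `dim⟨1, c^(1), …, c^(m)⟩ = m + 1` (`m ≤ n - 1`),
the number of pairs `(E, D)` with `E ≤ C` of dimension `n-1` containing all `c^(i)` and
`D` self-dual containing the all-ones vector with `D ∩ C = E` equals
`(q^{n-m-1} - 1)/(q - 1)`. -/
theorem sum_alphaE_qE1
    {F : Type} [Field F] [Fintype F] (hq : Odd (Fintype.card F)) {n : ℕ}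
    (C : Submodule F (Fin (2 * n) → F)) (hC : C = dualCode (id : F → F) C)
    (hone : allOnes F (2 * n) ∈ C)
    {m : ℕ} (hm : m + 1 ≤ n) (c : Fin m → (Fin (2 * n) → F)) (hc : ∀ j, c j ∈ C)
    (hrank : Module.finrank F
      ↥(Submodule.span F (insert (allOnes F (2 * n)) (Set.range c))) = m + 1) :
    Nat.card {ED : Submodule F (Fin (2 * n) → F) × Submodule F (Fin (2 * n) → F) //
        ED.1 ≤ C ∧ Module.finrank F ↥ED.1 + 1 = n ∧ (∀ j, c j ∈ ED.1) ∧
        ED.2 = dualCode (id : F → F) ED.2 ∧ allOnes F (2 * n) ∈ ED.2 ∧ ED.2 ⊓ C = ED.1} =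
      (Fintype.card F ^ (n - m - 1) - 1) / (Fintype.card F - 1) := by
  classical
  have h2 : (2 : F) ≠ 0 := by
    have : ringChar F ≠ 2 := fun h => by
      have := FiniteField.even_card_of_char_two h
      have := Nat.odd_iff.1 hq
      omega
    exact Ring.two_ne_zero this
  let b : LinearMap.BilinForm F (Fin (2 * n) → F) := Matrix.toBilin' 1
  have hb : ∀ x y, b x y = ∑ i, x i * y i := by
    intro x y
    simp [b, Matrix.toBilin'_apply', dotProduct]
  have hs : ∀ x y, b x y = b y x := by
    intro x y
    simp only [hb, mul_comm]
  have hnd : b.Nondegenerate := by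
    apply Matrix.Nondegenerate.toBilin'
    exact Matrix.nondegenerate_of_det_ne_zero (by simp)
  have hdual : ∀ X : Submodule F (Fin (2 * n) → F), dualCode (id : F → F) X = b.orthogonal X := by
    intro X
    ext v
    change (∀ c ∈ X, ∑ i, v i * c i = 0) ↔ ∀ c ∈ X, b c v = 0
    simp only [hs _ v, hb]
  have hW : Submodule.span F (insert (allOnes F (2 * n)) (Set.range c)) ≤ C := by
    rw [Submodule.span_le, Set.insert_subset_iff]
    exact ⟨hone, by rintro _ ⟨j, rfl⟩; exact hc j⟩
  rw [hdual] at hC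
  have := KneserAux.count_pairs b h2 hs hnd (by simp) C _ hC.symm hW hrank hm
  rw [Nat.card_eq_fintype_card (α := F)] at this
  rw [← this]
  refine Nat.card_congr (Equiv.subtypeEquivRight ?_)
  rintro ⟨E, D⟩
  simp only [hdual, Submodule.span_le, Set.insert_subset_iff, SetLike.mem_coe, Set.range_subset_iff]
  constructor
  · rintro ⟨h1, h2, h3, h4, h5, h6⟩
    exact ⟨h2, ⟨by rw [← h6]; exact ⟨h5, hone⟩, h3⟩, h4.symm, h6⟩
  · rintro ⟨h2, ⟨h5, h3⟩, h4, h6⟩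
    refine ⟨by rw [← h6]; exact inf_le_right, h2, h3, h4.symm, ?_, h6⟩
    rw [← h6] at h5
    exact h5.1
end
end

section
/- Let C, D ≤ F_q^N be codes with dim C = dim D = n, let c = (c^(1),…,c^(n)) be an ordered basis of C, and suppose a_{mon(c)}(D) > 0, i.e. there exists an n-tuple d ∈ D^n with mon(d) = mon(c). Then D is equivalent to C, i.e. D = π(C) for some coordinate permutation π ∈ S_N. -/
noncomputable section

open KneserHeckeCodes

/-- If `C, D ≤ F_q^N` are codes of dimension `n`, `c` is an ordered basis
of `C`, and `a_{mon(c)}(D) > 0`, then `D` is (permutation) equivalent to `C`. -/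
theorem equivCode_of_aX_mon_basis_pos
    {F : Type} [Field F] [Fintype F] {N n : ℕ}
    (C D : Submodule F (Fin N → F))
    (hC : Module.finrank F ↥C = n) (hD : Module.finrank F ↥D = n)
    (c : Fin n → (Fin N → F)) (hci : LinearIndependent F c)
    (hcs : Submodule.span F (Set.range c) = C)
    (ha : 0 < aX (mon c) D) :
    equivCode C D := by
  classical
  have hne : Nonempty {d : Fin n → (Fin N → F) // (∀ j, d j ∈ D) ∧ mon d = mon c} := by
    by_contra h
    rw [not_nonempty_iff] at h
    unfold aX at ha
    rw [Nat.card_of_isEmpty] at ha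
    exact lt_irrefl _ ha
  obtain ⟨d, hdD, hmon⟩ := hne
  have hfib : ∀ v : Fin n → F,
      Nonempty ({i : Fin N // (fun j => d j i) = v} ≃ {i : Fin N // (fun j => c j i) = v}) := by
    intro v
    have h := congrFun hmon v
    unfold mon at h
    simp only [funext_iff]
    exact ⟨(Finite.equivFin _).trans ((finCongr h).trans (Finite.equivFin _).symm)⟩
  let e := fun v => (hfib v).some
  let π : Equiv.Perm (Fin N) := Equiv.ofFiberEquiv e
  have hπ : ∀ j, LinearMap.funLeft F F π (c j) = d j := by
    intro j
    funext i
    exact congrFun (Equiv.ofFiberEquiv_map e i) j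
  refine ⟨π, ?_⟩
  have hle : permCode π C ≤ D := by
    unfold permCode
    rw [← hcs, Submodule.map_span_le]
    rintro _ ⟨j, rfl⟩
    rw [hπ]
    exact hdD j
  refine Submodule.eq_of_le_of_finrank_eq hle ?_
  unfold permCode
  rw [hD, ← hC]
  exact (LinearEquiv.finrank_eq (Submodule.equivMapOfInjective _
    (LinearMap.funLeft_injective_of_surjective F F π π.surjective) C)).symm
end
end
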